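/- Let φ be an injective endomorphism of the free group F_n with tr(φ^{ab}) < 1. Then there exists c ∈ F_n such that fix(i_c ∘ φ) is the trivial subgroup and i_c ∘ φ has no attracting fixed words, i.e., rk(fix(i_c ∘ φ)) = 0 and a(i_c ∘ φ) = 0. -/

import Mathlib

/-!
The lifts of the map of the rose induced by `φ` to the Cayley tree are the maps `g ↦ c φ(g)`, and
`fix(i_c ∘ φ)` acts on the tree by left translations commuting with the lift of `c`. The displacement
`g⁻¹ c φ(g)` of a vertex (`disp`) determines its orbit under this action, and the displacements for a
given `c` form its twisted conjugacy class. Moving every vertex one step towards its image defines a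
flow (`flow`). Its sinks are the fixed vertices and the edges whose ends flow towards each other; its
sources are the edges crossed by the flow in neither direction.

Sinks minus sources, summed over all displacements, equals `1 - tr(φ^ab)` (`sum_localIndex`): the
signed number of edges labelled `x_i` that are sinks or sources is minus the exponent sum of `x_i` in
`φ(x_i)`, since both counts are additive (`sum_startDiff`). As `1 - tr > 0`, some twisted conjugacy
class has finitely many sinks and sources and more sinks than sources (`exists_class`). Let `c` be a
member of it.

A function on the tree that is constant along the flow and across all sources is constant, so the
functions constant along the flow whose jumps depend only on displacements form a space of dimension
at most one more than the number of sources (`card_le_sources`). The basin indicators of the sinks are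
independent elements of this space; having one more element independent of them would contradict the
choice of `c` (`card_sinks_le`). If some vertex never reached a sink, the constant function would be
such an element, so every vertex flows to a sink (`exists_sink`). If `fix(i_c ∘ φ)` were nontrivial, it
would be a nontrivial free group by Nielsen-Schreier, and a nonzero homomorphism from it to `ℚ`, made
into an equivariant function on the sinks and spread along the flow, would be such an element
(`fixed_trivial`). Finally, an attracting fixed word is eventually a flow line going to infinity, which
never meets a sink (`not_attracting_of_sinks`).
-/

open Filter

namespace ZZFix

/-- A letter: a basis element together with a sign. -/
abbrev Letter (α : Type*) := α × Bool

/-- The inverse letter. -/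
def linv {α : Type*} (l : Letter α) : Letter α := (l.1, !l.2)

/-- An infinite reduced word: a sequence of letters with no adjacent cancellation. -/
def InfWord (α : Type*) : Type _ := {w : ℕ → Letter α // ∀ i, w (i + 1) ≠ linv (w i)}

/-- The length-`i` prefix of an infinite reduced word, as a list of letters. -/
def prefixList {α : Type*} (W : InfWord α) (i : ℕ) : List (Letter α) :=
  (List.range i).map W.1

/-- The length-`i` prefix of an infinite reduced word, as an element of the free group. -/
def wordPrefix {α : Type*} (W : InfWord α) (i : ℕ) : FreeGroup α :=
  FreeGroup.mk (prefixList W i)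

/-- Length of the longest common prefix of two lists. -/
def commonPrefixLength {β : Type*} [DecidableEq β] : List β → List β → ℕ
  | a :: as, b :: bs => if a = b then commonPrefixLength as bs + 1 else 0
  | _, _ => 0

variable {α : Type*} [DecidableEq α]

/-- `|W ∧ g|` for an infinite reduced word `W` and a finite reduced word `g`. -/
def wedgeF (W : InfWord α) (g : FreeGroup α) : ℕ :=
  commonPrefixLength (prefixList W (FreeGroup.toWord g).length) (FreeGroup.toWord g)

/-- `|g ∧ h|` for finite reduced words. -/
def wedgeFF (g h : FreeGroup α) : ℕ :=
  commonPrefixLength (FreeGroup.toWord g) (FreeGroup.toWord h)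

/-- `|W ∧ V|` for infinite reduced words, valued in `ℕ∞` (it is `⊤` iff `W = V`). -/
noncomputable def wedgeI {α : Type*} (W V : InfWord α) : ℕ∞ :=
  sSup ((fun i : ℕ => (i : ℕ∞)) '' {i : ℕ | prefixList W i = prefixList V i})

/-- A sequence of group elements converges to the infinite reduced word `W`
(in the initial segment metric on `F ⊔ ∂F`). -/
def ConvergesTo (u : ℕ → FreeGroup α) (W : InfWord α) : Prop :=
  Tendsto (fun i => wedgeF W (u i)) atTop atTop

/-- `W` is a fixed infinite word of `φ`: `|W ∧ φ(W_i)| → ∞`. -/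
def IsFixedInfWord (φ : FreeGroup α →* FreeGroup α) (W : InfWord α) : Prop :=
  Tendsto (fun i => wedgeF W (φ (wordPrefix W i))) atTop atTop

/-- `W` is an attracting fixed word of `φ`: it is fixed and `|W ∧ φ(W_i)| - i → +∞`. -/
def IsAttractingFixedWord (φ : FreeGroup α →* FreeGroup α) (W : InfWord α) : Prop :=
  IsFixedInfWord φ W ∧
    Tendsto (fun i => (wedgeF W (φ (wordPrefix W i)) : ℤ) - (i : ℤ)) atTop atTop

/-- The fixed subgroup of an endomorphism. -/
def fixedSubgroup {G : Type*} [Group G] (φ : G →* G) : Subgroup G where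
  carrier := {g | φ g = g}
  one_mem' := map_one φ
  mul_mem' := by
    intro a b ha hb
    simp only [Set.mem_setOf_eq] at *
    rw [map_mul, ha, hb]
  inv_mem' := by
    intro a ha
    simp only [Set.mem_setOf_eq] at *
    rw [map_inv, ha]

/-- The rank (minimal number of generators) of a subgroup, valued in `ℕ∞`. -/
noncomputable def grpRank {G : Type*} [Group G] (H : Subgroup G) : ℕ∞ :=
  sInf {k : ℕ∞ | ∃ S : Finset G, Subgroup.closure (S : Set G) = H ∧ (S.card : ℕ∞) = k}

/-- Two infinite reduced words are equivalent (w.r.t. `φ`) if `W' = U·W` for some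
`U ∈ fix(φ)`, i.e. the reduced products `U·W_i` converge to `W'`. -/
def EquivFixedWords (φ : FreeGroup α →* FreeGroup α) (W W' : InfWord α) : Prop :=
  ∃ U ∈ fixedSubgroup φ, ConvergesTo (fun i => U * wordPrefix W i) W'

/-- `a(φ)`: the number of equivalence classes of attracting fixed words, in `ℕ∞`. -/
noncomputable def aCard (φ : FreeGroup α →* FreeGroup α) : ℕ∞ :=
  ENat.card (Quot fun (W W' : {W : InfWord α // IsAttractingFixedWord φ W}) =>
    EquivFixedWords φ W.1 W'.1)

/-- The inner automorphism `i_c : g ↦ c g c⁻¹`, as a monoid homomorphism. -/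
def innerAut {G : Type*} [Group G] (c : G) : G →* G := (MulAut.conj c).toMonoidHom

/-- Two endomorphisms are similar if `ψ₂ = i_c ∘ ψ₁ ∘ i_c⁻¹` for some `c`. -/
def Similar {G : Type*} [Group G] (ψ₁ ψ₂ : G →* G) : Prop :=
  ∃ c : G, ψ₂ = ((innerAut c).comp ψ₁).comp (innerAut c⁻¹)

/-- The trace of the endomorphism of `ℤⁿ` induced by `φ` on the abelianization. -/
def abTrace {n : ℕ} (φ : FreeGroup (Fin n) →* FreeGroup (Fin n)) : ℤ :=
  ∑ i : Fin n, Multiplicative.toAdd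
    ((FreeGroup.lift fun k => Multiplicative.ofAdd (if k = i then (1 : ℤ) else 0))
      (φ (FreeGroup.of i)))

/-- The constant infinite reduced word `l l l ⋯`. -/
def constWord {α : Type*} (l : Letter α) : InfWord α :=
  ⟨fun _ => l, fun _ h => by
    have h2 := congrArg Prod.snd h
    simp [linv] at h2⟩

/-- `W` is an attracting fixed point of `φ`: it is fixed, and there is `i₀` such that
every finite or infinite reduced word `V` with `|W ∧ V| ≥ i₀` satisfies
`|W ∧ φᵖ(V)| → ∞` as `p → ∞`. -/
def IsAttractingFixedPoint (φ : FreeGroup α →* FreeGroup α) (W : InfWord α) : Prop :=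
  IsFixedInfWord φ W ∧
    ∃ i₀ : ℕ,
      (∀ g : FreeGroup α, i₀ ≤ wedgeF W g →
        Tendsto (fun p => wedgeF W ((⇑φ)^[p] g)) atTop atTop) ∧
      (∀ V : InfWord α, (i₀ : ℕ∞) ≤ wedgeI W V →
        ∀ Vs : ℕ → InfWord α, Vs 0 = V →
          (∀ p, ConvergesTo (fun i => φ (wordPrefix (Vs p) i)) (Vs (p + 1))) →
          Tendsto (fun p => wedgeI W (Vs p)) atTop atTop)

open scoped Classical in
/-- The initial segment metric. -/
noncomputable def distIS {α : Type*} (W V : InfWord α) : ℝ :=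
  if W = V then 0 else 1 / (1 + ((wedgeI W V).toNat : ℝ))

/-! ### First letters of reduced words -/

/-- The reduced word of `w` begins with the letter `l`. -/
def StartsWith (l : Letter α) (w : FreeGroup α) : Prop :=
  (FreeGroup.toWord w).head? = some l

/-- The first letter of the reduced word of `w`, as a group element; it is `1` for `w = 1`. -/
def firstLetter (w : FreeGroup α) : FreeGroup α :=
  FreeGroup.mk ((FreeGroup.toWord w).take 1)

lemma StartsWith.eq {l l' : Letter α} {w : FreeGroup α} (h : StartsWith l w)
    (h' : StartsWith l' w) : l = l' := by
  unfold StartsWith at h h'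
  rw [h] at h'
  exact Option.some.inj h'

lemma not_startsWith_one (l : Letter α) : ¬ StartsWith l (1 : FreeGroup α) := by
  simp [StartsWith]

lemma StartsWith.firstLetter_eq {l : Letter α} {w : FreeGroup α} (h : StartsWith l w) :
    firstLetter w = FreeGroup.mk [l] := by
  unfold StartsWith at h
  unfold firstLetter
  cases hw : FreeGroup.toWord w with
  | nil => simp [hw] at h
  | cons a L =>
    rw [hw] at h
    simp at h
    simp [h]

@[simp] lemma firstLetter_one : firstLetter (1 : FreeGroup α) = 1 := by
  simp [firstLetter, FreeGroup.one_eq_mk]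

lemma exists_startsWith {w : FreeGroup α} (h : w ≠ 1) : ∃ l, StartsWith l w := by
  cases hw : FreeGroup.toWord w with
  | nil => exact absurd (FreeGroup.toWord_eq_nil_iff.1 hw) h
  | cons a L => exact ⟨a, by simp [StartsWith, hw]⟩

/-- Left multiplication by `x` makes a word begin with `x` unless it cancels a leading `x⁻¹`. -/
lemma startsWith_inv_iff (i : α) (w : FreeGroup α) :
    StartsWith (i, false) w ↔ ¬ StartsWith (i, true) (FreeGroup.of i * w) := by
  unfold StartsWith
  have hr : FreeGroup.toWord (FreeGroup.of i * w)
      = FreeGroup.reduce ((i, true) :: FreeGroup.toWord w) := by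
    rw [FreeGroup.toWord_mul, FreeGroup.toWord_of]; rfl
  have hred : FreeGroup.IsReduced (FreeGroup.toWord w) := FreeGroup.isReduced_toWord
  rw [hr, FreeGroup.reduce.cons, FreeGroup.reduce_toWord]
  cases hw : FreeGroup.toWord w with
  | nil => simp
  | cons a L =>
    rw [hw] at hred
    obtain ⟨j, b⟩ := a
    by_cases hc : i = j ∧ true = !b
    · obtain ⟨rfl, hb⟩ := hc
      obtain rfl : b = false := by simpa using hb
      cases L with
      | nil => simp
      | cons a' L =>
        have := (FreeGroup.isReduced_cons_cons.1 hred).1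
        simp only [List.head?_cons, Bool.not_false, and_self, if_true, Option.some.injEq,
          true_iff]
        rintro rfl
        simp at this
    · simp only [hc, if_false, List.head?_cons, not_true_eq_false, iff_false, Option.some.injEq]
      rintro h
      exact hc ⟨(congrArg Prod.fst h).symm, by simpa using congrArg Prod.snd h⟩

/-- Right multiplication by a letter either appends that letter or deletes a final inverse. -/
lemma toWord_mul_letter (w : FreeGroup α) (l : Letter α) :
    FreeGroup.toWord (w * FreeGroup.mk [l]) = FreeGroup.toWord w ++ [l] ∨
    FreeGroup.toWord w = FreeGroup.toWord (w * FreeGroup.mk [l]) ++ [linv l] := by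
  have hred : FreeGroup.IsReduced (FreeGroup.toWord w) := FreeGroup.isReduced_toWord
  rcases List.eq_nil_or_concat (FreeGroup.toWord w) with hw | ⟨L, a, hw⟩
  · left
    rw [FreeGroup.toWord_eq_nil_iff.1 hw]
    simp [FreeGroup.toWord_mk]
  · have hwm : w = FreeGroup.mk (L ++ [a]) := by
      rw [← List.concat_eq_append, ← hw, FreeGroup.mk_toWord]
    rw [List.concat_eq_append] at hw
    rw [hw] at hred
    by_cases hc : a = linv l
    · right
      have hL : FreeGroup.IsReduced L := hred.infix ⟨[], [a], by simp⟩
      have : w * FreeGroup.mk [l] = FreeGroup.mk L := by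
        rw [hwm, ← FreeGroup.mul_mk, mul_assoc, hc]
        have : FreeGroup.mk [linv l] * FreeGroup.mk [l] = 1 := by
          rw [show FreeGroup.mk [linv l] = (FreeGroup.mk [l])⁻¹ by
            rw [FreeGroup.inv_mk]; simp [FreeGroup.invRev, linv]]
          exact inv_mul_cancel _
        rw [this, mul_one]
      rw [this, FreeGroup.toWord_mk, hL.reduce_eq, hw, hc]
    · left
      have h2 : FreeGroup.IsReduced ([a] ++ [l]) := by
        simp only [List.cons_append, List.nil_append, FreeGroup.isReduced_cons_cons]
        refine ⟨fun h => ?_, FreeGroup.IsReduced.singleton⟩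
        by_contra hb
        exact hc (Prod.ext h (Bool.eq_not_iff.2 hb))
      have h3 := hred.append_overlap h2 (by simp)
      rw [hwm, FreeGroup.mul_mk, FreeGroup.toWord_mk, h3.reduce_eq, ← hwm, hw]

/-- Right multiplication by a word shorter than `w` does not change the first letter of `w`. -/
lemma startsWith_mul {l : Letter α} {w v : FreeGroup α} (h : StartsWith l w)
    (hlen : v.norm < w.norm) : StartsWith l (w * v) := by
  suffices H : ∀ (L : List (Letter α)) (w : FreeGroup α), StartsWith l w →
      L.length < w.norm → StartsWith l (w * FreeGroup.mk L) by
    have := H v.toWord w h hlen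
    rwa [FreeGroup.mk_toWord] at this
  intro L
  induction L with
  | nil => intro w hw _; simpa [← FreeGroup.one_eq_mk] using hw
  | cons a L ih =>
    intro w hw hl
    have e : w * FreeGroup.mk (a :: L) = w * FreeGroup.mk [a] * FreeGroup.mk L := by
      rw [mul_assoc, FreeGroup.mul_mk]; rfl
    rw [e]
    unfold FreeGroup.norm at hl ih
    unfold StartsWith at hw
    rcases toWord_mul_letter w a with h1 | h1
    · apply ih
      · unfold StartsWith
        rw [h1, List.head?_append, hw]; rfl
      · rw [h1]; simp at hl ⊢; omega
    · rw [h1] at hw hl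
      simp at hl
      apply ih
      · unfold StartsWith
        cases h2 : FreeGroup.toWord (w * FreeGroup.mk [a]) with
        | nil => simp [h2] at hl
        | cons b M => rw [h2] at hw; simpa using hw
      · omega

/-! ### Counting crossings of an edge -/

/-- The indicator function of the words beginning with `x_i`. -/
def startInd (i : α) (w : FreeGroup α) : ℤ := 
  if (FreeGroup.toWord w).head? = some (i, true) then 1 else 0

lemma startInd_pos {i : α} {w : FreeGroup α} (h : StartsWith (i, true) w) : startInd i w = 1 :=
  if_pos h

lemma startInd_neg {i : α} {w : FreeGroup α} (h : ¬ StartsWith (i, true) w) :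
    startInd i w = 0 :=
  if_neg h

/-- The change of `startInd i` at `w` under right multiplication by `v`. -/
def startDiff (i : α) (v w : FreeGroup α) : ℤ := startInd i w - startInd i (w * v)

/-- The homomorphism counting the exponent sum of `x_i`. -/
def expSum (i : α) : FreeGroup α →* Multiplicative ℤ :=
  FreeGroup.lift fun k => Multiplicative.ofAdd (if k = i then (1 : ℤ) else 0)

lemma startDiff_of (i j : α) (w : FreeGroup α) :
    startDiff i (FreeGroup.of j) w = if w = 1 then (if j = i then -1 else 0) else 0 := by
  have key := toWord_mul_letter w (j, true)
  change FreeGroup.toWord (w * FreeGroup.of j) = _ ∨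
    FreeGroup.toWord w = FreeGroup.toWord (w * FreeGroup.of j) ++ _ at key
  unfold startDiff startInd
  by_cases hw : w = 1
  · subst hw
    by_cases h : j = i <;> simp [h]
  · rw [if_neg hw]
    rcases key with h | h
    · have hne : FreeGroup.toWord w ≠ [] := fun h => hw (FreeGroup.toWord_eq_nil_iff.1 h)
      rw [h, List.head?_append_of_ne_nil _ hne, sub_self]
    · rw [h]
      by_cases hne : FreeGroup.toWord (w * FreeGroup.of j) = []
      · simp [hne, linv]
      · rw [List.head?_append_of_ne_nil _ hne, sub_self]

/-- `startInd i` changes from `w` to `w v` exactly when the path labelled `v` starting at `w` has a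
nonzero net crossing of the edge from `1` to `x_i`. Each occurrence of `x_i^{±1}` in `v` crosses that
edge for exactly one `w`, so the sum of `startDiff i v` is minus the exponent sum. In the proof, both
sides are additive in `v`, so it suffices to check letters. -/
lemma sum_startDiff (i : α) (v : FreeGroup α) :
    (Function.support (startDiff i v)).Finite ∧
      ∑ᶠ w, startDiff i v w = - Multiplicative.toAdd (expSum i v) := by
  induction v using FreeGroup.induction_on with
  | C1 =>
    have : startDiff i (1 : FreeGroup α) = fun _ => 0 := by
      funext w; simp [startDiff]
    simp [this]
  | of j =>
    have hs : Function.support (startDiff i (FreeGroup.of j)) ⊆ {(1 : FreeGroup α)} := by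
      intro w hw
      by_contra hne
      exact hw (by rw [startDiff_of, if_neg (by simpa using hne)])
    refine ⟨(Set.finite_singleton _).subset hs, ?_⟩
    rw [finsum_eq_single _ (1 : FreeGroup α)
      (fun w hw => by rw [startDiff_of, if_neg hw]), startDiff_of]
    by_cases h : j = i <;> simp [expSum, h]
  | inv_of j ih =>
    have e : startDiff i (FreeGroup.of j)⁻¹
        = fun w => - startDiff i (FreeGroup.of j) (Equiv.mulRight (FreeGroup.of j)⁻¹ w) := by
      funext w; simp [startDiff]
    rw [e]
    constructor
    · rw [Function.support_fun_neg]
      exact ih.1.preimage (Equiv.injective (Equiv.mulRight (FreeGroup.of j)⁻¹)).injOn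
    · rw [finsum_neg_distrib, finsum_comp_equiv, ih.2]; simp
  | mul u v hu hv =>
    have e : startDiff i (u * v)
        = fun w => startDiff i u w + startDiff i v (Equiv.mulRight u w) := by
      funext w; simp [startDiff, mul_assoc]
    have h2 : (Function.support fun w => startDiff i v (Equiv.mulRight u w)).Finite :=
      hv.1.preimage (Equiv.injective (Equiv.mulRight u)).injOn
    rw [e]
    constructor
    · exact (hu.1.union h2).subset (Function.support_add _ _)
    · rw [finsum_add_distrib hu.1 h2, finsum_comp_equiv, hu.2, hv.2]
      simp; ring

/-! ### The flow -/

section Flow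

variable (φ : FreeGroup α →* FreeGroup α)

/-- The displacement `g⁻¹ c φ(g)`: the path in the Cayley tree from `g` to its image `c φ(g)` under
the lift determined by `c`, read as a word. -/
def disp (c g : FreeGroup α) : FreeGroup α := g⁻¹ * c * φ g

/-- The flow on the vertices of the Cayley tree: one step from `g` towards `c φ(g)`. -/
def flow (c g : FreeGroup α) : FreeGroup α := g * firstLetter (disp φ c g)

/-- The flow as seen on displacements. -/
def dispFlow (w : FreeGroup α) : FreeGroup α := (firstLetter w)⁻¹ * w * φ (firstLetter w)

/-- A vertex with displacement `w` is fixed, or is the tail of a positive edge whose endpoints flow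
towards each other. -/
def IsSink (w : FreeGroup α) : Prop :=
  w = 1 ∨ ∃ i, StartsWith (i, true) w ∧ ¬ StartsWith (i, true) (w * φ (FreeGroup.of i))

/-- The edge labelled `x_i` at a vertex with displacement `w` is crossed by the flow in neither
direction. -/
def IsSource (w : FreeGroup α) (i : α) : Prop :=
  ¬ StartsWith (i, true) w ∧ StartsWith (i, true) (w * φ (FreeGroup.of i))

variable {φ}

lemma disp_mul (c g v : FreeGroup α) : disp φ c (g * v) = v⁻¹ * disp φ c g * φ v := by
  simp only [disp, map_mul]; group

lemma disp_flow (c g : FreeGroup α) : disp φ c (flow φ c g) = dispFlow φ (disp φ c g) := by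
  rw [flow, disp_mul, dispFlow]

lemma disp_iterate (c : FreeGroup α) (k : ℕ) (g : FreeGroup α) :
    disp φ c ((flow φ c)^[k] g) = (dispFlow φ)^[k] (disp φ c g) :=
  Function.Semiconj.iterate_right (disp_flow c) k g

/-- The displacements of the two ends of an edge: the far end flows back along the edge exactly
when `w φ(x_i)` does not begin with `x_i`. -/
lemma startsWith_disp_mul_of (c g : FreeGroup α) (i : α) :
    StartsWith (i, false) (disp φ c (g * FreeGroup.of i)) ↔
      ¬ StartsWith (i, true) (disp φ c g * φ (FreeGroup.of i)) := by
  rw [startsWith_inv_iff, disp_mul, mul_assoc, mul_inv_cancel_left]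

lemma flow_of_true {c g : FreeGroup α} {i : α} (h : StartsWith (i, true) (disp φ c g)) :
    flow φ c g = g * FreeGroup.of i := by
  rw [flow, h.firstLetter_eq]; rfl

lemma flow_of_false {c g : FreeGroup α} {i : α} (h : StartsWith (i, false) (disp φ c g)) :
    flow φ c g = g * (FreeGroup.of i)⁻¹ := by
  rw [flow, h.firstLetter_eq]; rfl

lemma flow_of_one {c g : FreeGroup α} (h : disp φ c g = 1) : flow φ c g = g := by
  simp [flow, h]

lemma IsSink.flow_flow {c g : FreeGroup α} (h : IsSink φ (disp φ c g)) :
    flow φ c (flow φ c g) = g := by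
  rcases h with h | ⟨i, h1, h2⟩
  · rw [flow_of_one h, flow_of_one h]
  · rw [flow_of_true h1, flow_of_false ((startsWith_disp_mul_of c g i).2 h2), mul_inv_cancel_right]

lemma IsSink.flow_eq_or {c g : FreeGroup α} (h : IsSink φ (disp φ c g)) :
    flow φ c g = g ∨ ¬ IsSink φ (disp φ c (flow φ c g)) := by
  rcases h with h | ⟨i, h1, h2⟩
  · exact Or.inl (flow_of_one h)
  · right
    have h3 := (startsWith_disp_mul_of c g i).2 h2
    rw [flow_of_true h1]
    rintro (h | ⟨j, h4, -⟩)
    · rw [h] at h3; exact not_startsWith_one _ h3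
    · have := h4.eq h3
      simp at this

/-- Along the orbit of a sink, the only sink is the starting point. -/
lemma IsSink.iterate {c g : FreeGroup α} (h : IsSink φ (disp φ c g)) (k : ℕ)
    (hk : IsSink φ (disp φ c ((flow φ c)^[k] g))) : (flow φ c)^[k] g = g := by
  have H : (flow φ c)^[k] g = g ∨ (flow φ c)^[k] g = flow φ c g := by
    clear hk
    induction k with
    | zero => exact Or.inl rfl
    | succ k ih =>
      rw [Function.iterate_succ_apply']
      rcases ih with e | e <;> rw [e]
      · exact Or.inr rfl
      · exact Or.inl h.flow_flow
  rcases H with e | e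
  · exact e
  · rcases h.flow_eq_or with e' | e'
    · rw [e, e']
    · rw [e] at hk; exact absurd hk e'

/-- A function on vertices that is constant along the flow and across all sources is constant,
because every edge is either a source or a step of the flow. -/
lemma const_of_flow {β : Type*} (c : FreeGroup α) (u : FreeGroup α → β)
    (h1 : ∀ g, u (flow φ c g) = u g)
    (h2 : ∀ g i, IsSource φ (disp φ c g) i → u (g * FreeGroup.of i) = u g) (g : FreeGroup α) :
    u g = u 1 := by
  have hof : ∀ g i, u (g * FreeGroup.of i) = u g := by
    intro g i
    by_cases hs : StartsWith (i, true) (disp φ c g)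
    · rw [← flow_of_true hs, h1]
    · by_cases ht : StartsWith (i, true) (disp φ c g * φ (FreeGroup.of i))
      · exact h2 g i ⟨hs, ht⟩
      · have := h1 (g * FreeGroup.of i)
        rw [flow_of_false ((startsWith_disp_mul_of c g i).2 ht), mul_inv_cancel_right] at this
        exact this.symm
  have key : ∀ v g, u (g * v) = u g := by
    intro v
    induction v using FreeGroup.induction_on with
    | C1 => simp
    | of i => exact fun g => hof g i
    | inv_of i _ => intro g; have := hof (g * (FreeGroup.of i)⁻¹) i; simpa using this.symm
    | mul x y hx hy => intro g; rw [← mul_assoc, hy, hx]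
  simpa using key g 1

lemma mem_fixed_iff (c h : FreeGroup α) :
    h ∈ fixedSubgroup ((innerAut c).comp φ) ↔ c * φ h = h * c := by
  change c * φ h * c⁻¹ = h ↔ _
  exact mul_inv_eq_iff_eq_mul

lemma disp_mul_left {c h : FreeGroup α} (hh : h ∈ fixedSubgroup ((innerAut c).comp φ))
    (g : FreeGroup α) : disp φ c (h * g) = disp φ c g := by
  rw [mem_fixed_iff] at hh
  simp only [disp, map_mul, mul_inv_rev]
  rw [show g⁻¹ * h⁻¹ * c * (φ h * φ g) = g⁻¹ * h⁻¹ * (c * φ h) * φ g by group, hh]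
  group

/-- Together with `disp_mul_left`: two vertices have the same displacement exactly when they differ
by left translation by an element of `fix(i_c ∘ φ)`. -/
lemma mem_fixed_of_disp_eq {c g g' : FreeGroup α} (h : disp φ c g' = disp φ c g) :
    g' * g⁻¹ ∈ fixedSubgroup ((innerAut c).comp φ) := by
  rw [mem_fixed_iff]
  have e : c * φ g' = g' * (g⁻¹ * c * φ g) := by
    rw [← disp, ← h, disp]; group
  rw [map_mul, ← mul_assoc, e, map_inv]; group

lemma flow_mul_left {c h : FreeGroup α} (hh : h ∈ fixedSubgroup ((innerAut c).comp φ))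
    (g : FreeGroup α) : flow φ c (h * g) = h * flow φ c g := by
  rw [flow, disp_mul_left hh, flow, mul_assoc]

lemma iterate_mul_left {c h : FreeGroup α} (hh : h ∈ fixedSubgroup ((innerAut c).comp φ))
    (k : ℕ) (g : FreeGroup α) : (flow φ c)^[k] (h * g) = h * (flow φ c)^[k] g :=
  ((Function.Semiconj.iterate_right (f := (h * ·)) (fun g => (flow_mul_left hh g).symm) k) g).symm

/-! ### The dimension count -/

/-- Linearly independent functions that are constant along the flow, and whose jump across an edge
depends only on the displacement, number at most one more than the sources: such a function is
determined by its value at `1` and its jumps across the sources. -/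
lemma card_le_sources {ι : Type*} [Fintype ι] (c : FreeGroup α) (b : ι → FreeGroup α → ℚ)
    (hflow : ∀ o g, b o (flow φ c g) = b o g)
    (hjump : ∀ o g g' i, disp φ c g = disp φ c g' →
      b o (g * FreeGroup.of i) - b o g = b o (g' * FreeGroup.of i) - b o g')
    (hind : ∀ a : ι → ℚ, (∀ g, ∑ o, a o * b o g = 0) → a = 0)
    (E : Finset (FreeGroup α × α))
    (hE : ∀ g i, IsSource φ (disp φ c g) i → (disp φ c g, i) ∈ E) :
    Fintype.card ι ≤ E.card + 1 := by
  classical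
  -- `s` picks, for each displacement that occurs, a vertex with that displacement.
  let s : FreeGroup α → FreeGroup α := Function.invFun (disp φ c)
  have hs : ∀ g, disp φ c (s (disp φ c g)) = disp φ c g :=
    fun g => Function.invFun_eq ⟨g, rfl⟩
  let L : (ι → ℚ) →ₗ[ℚ] ((E → ℚ) × ℚ) :=
    { toFun := fun a =>
        (fun e => ∑ o, a o * (b o (s e.1.1 * FreeGroup.of e.1.2) - b o (s e.1.1)),
          ∑ o, a o * b o 1)
      map_add' := by
        intro x y
        ext <;> simp [add_mul, Finset.sum_add_distrib]
      map_smul' := by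
        intro r x
        ext <;> simp [Finset.mul_sum, mul_assoc] }
  have hL : Function.Injective L := by
    rw [injective_iff_map_eq_zero]
    intro a ha
    have ha1 := congrArg Prod.fst ha
    have ha2 : ∑ o, a o * b o 1 = 0 := congrArg Prod.snd ha
    apply hind
    intro g
    rw [← ha2]
    refine const_of_flow (φ := φ) c (fun g => ∑ o, a o * b o g) ?_ ?_ g
    · intro g; simp only [hflow]
    · intro g i hi
      have h3 : ∑ o, a o * (b o (s (disp φ c g) * FreeGroup.of i) - b o (s (disp φ c g))) = 0 :=
        congrFun ha1 ⟨(disp φ c g, i), hE g i hi⟩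
      rw [← sub_eq_zero, ← Finset.sum_sub_distrib, ← h3]
      refine Finset.sum_congr rfl fun o _ => ?_
      rw [hjump o _ g i (hs g), mul_sub]
  have := LinearMap.finrank_le_finrank_of_injective hL
  simpa using this

open Classical in
/-- The indicator function of the basin of `p`: the displacements that flow to `p`. -/
noncomputable def basin (φ : FreeGroup α →* FreeGroup α) (p w : FreeGroup α) : ℚ :=
  if ∃ k, (dispFlow φ)^[k] w = p then 1 else 0

lemma basin_flow {c p g₀ : FreeGroup α} (hp : IsSink φ p) (hg₀ : disp φ c g₀ = p)
    (g : FreeGroup α) :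
    basin φ p (disp φ c (flow φ c g)) = basin φ p (disp φ c g) := by
  have : (∃ k, (dispFlow φ)^[k] (disp φ c (flow φ c g)) = p) ↔
      ∃ k, (dispFlow φ)^[k] (disp φ c g) = p := by
    rw [disp_flow]
    constructor
    · rintro ⟨k, hk⟩
      exact ⟨k + 1, hk⟩
    · rintro ⟨k, hk⟩
      have h2 : (dispFlow φ)^[2] p = p := by
        rw [← hg₀, ← disp_iterate]
        rw [← hg₀] at hp
        exact congrArg _ hp.flow_flow
      refine ⟨k + 1, ?_⟩
      rw [← Function.iterate_succ_apply, show (k + 1).succ = 2 + k by omega,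
        Function.iterate_add_apply, hk, h2]
  classical
  unfold basin
  congr 1
  exact propext this

lemma basin_self (p : FreeGroup α) : basin φ p p = 1 := if_pos ⟨0, rfl⟩

lemma basin_of_ne {c g p : FreeGroup α} (hg : IsSink φ (disp φ c g)) (hp : IsSink φ p)
    (hne : disp φ c g ≠ p) : basin φ p (disp φ c g) = 0 := by
  refine if_neg ?_
  rintro ⟨k, hk⟩
  rw [← disp_iterate] at hk
  rw [← hk] at hp
  rw [hg.iterate k hp] at hk
  exact hne hk

/-- One more function in addition to the basin indicators of the sinks in `P`, independent of them,
forces `P` to have no more elements than there are sources. -/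
lemma card_sinks_le (c : FreeGroup α) (P : Finset (FreeGroup α))
    (hP : ∀ p ∈ P, IsSink φ p ∧ ∃ g, disp φ c g = p)
    (E : Finset (FreeGroup α × α))
    (hE : ∀ g i, IsSource φ (disp φ c g) i → (disp φ c g, i) ∈ E)
    (b : FreeGroup α → ℚ) (hflow : ∀ g, b (flow φ c g) = b g)
    (hjump : ∀ g g' i, disp φ c g = disp φ c g' →
      b (g * FreeGroup.of i) - b g = b (g' * FreeGroup.of i) - b g')
    (hind : ∀ (t : ℚ) (a : P → ℚ),
      (∀ g, t * b g + ∑ p : P, a p * basin φ p (disp φ c g) = 0) → t = 0) :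
    P.card ≤ E.card := by
  classical
  have := card_le_sources (φ := φ) (ι := Option P) c
    (fun o g => o.elim (b g) fun p => basin φ p (disp φ c g)) ?_ ?_ ?_ E hE
  · simpa using this
  · rintro (_ | p) g
    · exact hflow g
    · obtain ⟨h1, g₀, h2⟩ := hP p p.2
      exact basin_flow h1 h2 g
  · rintro (_ | p) g g' i h
    · exact hjump g g' i h
    · simp only [Option.elim_some, disp_mul, h]
  · intro a ha
    simp only [Fintype.sum_option, Option.elim_none, Option.elim_some] at ha
    have h0 : a none = 0 := hind _ _ ha
    funext o
    rcases o with _ | p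
    · exact h0
    · obtain ⟨h1, g, h2⟩ := hP p p.2
      have h3 := ha g
      rw [h0, zero_mul, zero_add, Finset.sum_eq_single p] at h3
      · rwa [h2, basin_self, mul_one] at h3
      · intro q _ hq
        rw [basin_of_ne (h2 ▸ h1) (hP q q.2).1, mul_zero]
        rw [h2]
        exact fun e => hq (Subtype.ext e.symm)
      · simp

/-- If the sinks outnumber the sources then every vertex flows to a sink; otherwise the constant
function would be independent of the basin indicators. -/
lemma exists_sink (c : FreeGroup α) (P : Finset (FreeGroup α))
    (hP : ∀ p ∈ P, IsSink φ p ∧ ∃ g, disp φ c g = p)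
    (E : Finset (FreeGroup α × α))
    (hE : ∀ g i, IsSource φ (disp φ c g) i → (disp φ c g, i) ∈ E)
    (hlt : E.card < P.card) (g : FreeGroup α) :
    ∃ k, IsSink φ (disp φ c ((flow φ c)^[k] g)) := by
  by_contra hno
  push Not at hno
  refine absurd (card_sinks_le c P hP E hE (fun _ => 1) (fun _ => rfl) (fun _ _ _ _ => rfl) ?_)
    (not_le.2 hlt)
  intro t a h
  have := h g
  rwa [mul_one, Finset.sum_eq_zero, add_zero] at this
  intro p _
  have : basin φ p (disp φ c g) = 0 := by
    refine if_neg ?_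
    rintro ⟨k, hk⟩
    apply hno k
    rw [disp_iterate, hk]
    exact (hP p p.2).1
  rw [this, mul_zero]

end Flow

/-- A nontrivial subgroup `H` of a free group is free, hence has a nonzero homomorphism to `ℚ`. Such
a homomorphism extends to a function on the whole group that is equivariant for left translation
by `H`. -/
lemma exists_equivariant {G : Type*} [Group G] [IsFreeGroup G] {H : Subgroup G} (hH : H ≠ ⊥) :
    ∃ (r χ : G → ℚ), (∀ h ∈ H, ∀ g, r (h * g) = χ h + r g) ∧ ∃ h ∈ H, χ h ≠ 0 := by
  classical
  have : Nontrivial H := (Subgroup.nontrivial_iff_ne_bot H).2 hH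
  obtain ⟨x⟩ : Nonempty (IsFreeGroup.Generators H) := by
    by_contra hne
    rw [not_nonempty_iff] at hne
    have : Subsingleton H := (IsFreeGroup.toFreeGroup H).toEquiv.subsingleton
    exact not_subsingleton H this
  let χ : H →* Multiplicative ℤ := IsFreeGroup.lift fun _ => Multiplicative.ofAdd 1
  have hχ : χ (IsFreeGroup.of x) = Multiplicative.ofAdd 1 := IsFreeGroup.lift_of _ _
  let ρ : G → G := fun g => (Quotient.mk (QuotientGroup.rightRel H) g).out
  have hρ : ∀ g, g * (ρ g)⁻¹ ∈ H := fun g =>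
    QuotientGroup.rightRel_apply.1 (Quotient.exact (Quotient.out_eq (Quotient.mk _ g)))
  have hρ2 : ∀ h ∈ H, ∀ g, ρ (h * g) = ρ g := by
    intro h hh g
    have : Quotient.mk (QuotientGroup.rightRel H) (h * g) = Quotient.mk _ g := by
      apply Quotient.sound
      apply QuotientGroup.rightRel_apply.2
      simpa using hh
    simp only [ρ, this]
  let χ' : G → ℚ := fun g => if hg : g ∈ H then ((χ ⟨g, hg⟩).toAdd : ℚ) else 0
  refine ⟨fun g => χ' (g * (ρ g)⁻¹), χ', ?_, (IsFreeGroup.of x : H), Subtype.prop _, ?_⟩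
  · intro h hh g
    have h1 : h * g * (ρ (h * g))⁻¹ = h * (g * (ρ g)⁻¹) := by rw [hρ2 h hh, mul_assoc]
    simp only [h1, χ']
    rw [dif_pos (H.mul_mem hh (hρ g)), dif_pos hh, dif_pos (hρ g)]
    rw [show (⟨h * (g * (ρ g)⁻¹), H.mul_mem hh (hρ g)⟩ : H) = ⟨h, hh⟩ * ⟨_, hρ g⟩ from rfl]
    rw [map_mul, toAdd_mul, Int.cast_add]
  · simp [χ', hχ]

section Flow

variable {φ : FreeGroup α →* FreeGroup α}

/-- If the sinks outnumber the sources then the fixed subgroup is trivial; otherwise an equivariant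
function for it, transported from the sinks along the flow, would be independent of the basin
indicators. -/
lemma fixed_trivial (c : FreeGroup α) (P : Finset (FreeGroup α))
    (hP : ∀ p ∈ P, IsSink φ p ∧ ∃ g, disp φ c g = p)
    (E : Finset (FreeGroup α × α))
    (hE : ∀ g i, IsSource φ (disp φ c g) i → (disp φ c g, i) ∈ E)
    (hlt : E.card < P.card) : fixedSubgroup ((innerAut c).comp φ) = ⊥ := by
  classical
  by_contra hH
  obtain ⟨r, χ, hr, h₀, hh₀, hχ⟩ := exists_equivariant hH
  have hex := exists_sink c P hP E hE hlt
  -- `sink g` is the sink reached from `g`.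
  let sink : FreeGroup α → FreeGroup α := fun g => (flow φ c)^[Nat.find (hex g)] g
  have hsink : ∀ g, IsSink φ (disp φ c (sink g)) := fun g => Nat.find_spec (hex g)
  have hsink_uniq : ∀ g k, IsSink φ (disp φ c ((flow φ c)^[k] g)) →
      (flow φ c)^[k] g = sink g := by
    intro g k hk
    have hle : Nat.find (hex g) ≤ k := Nat.find_min' _ hk
    obtain ⟨m, rfl⟩ := Nat.exists_eq_add_of_le' hle
    rw [Function.iterate_add_apply] at hk ⊢
    exact (hsink g).iterate m hk
  have hsink_flow : ∀ g, sink (flow φ c g) = sink g := fun g =>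
    hsink_uniq g (Nat.find (hex (flow φ c g)) + 1) (hsink (flow φ c g))
  have hsink_mul : ∀ h ∈ fixedSubgroup ((innerAut c).comp φ), ∀ g,
      sink (h * g) = h * sink g := by
    intro h hh g
    rw [← hsink_uniq (h * g) (Nat.find (hex g)), iterate_mul_left hh]
    rw [iterate_mul_left hh, disp_mul_left hh]
    exact hsink g
  have hu : ∀ h ∈ fixedSubgroup ((innerAut c).comp φ), ∀ g,
      r (sink (h * g)) = χ h + r (sink g) := by
    intro h hh g
    rw [hsink_mul h hh, hr h hh]
  refine absurd (card_sinks_le c P hP E hE (fun g => r (sink g)) ?_ ?_ ?_) (not_le.2 hlt)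
  · intro g; simp only [hsink_flow]
  · intro g g' i h
    have hh := mem_fixed_of_disp_eq h
    have e1 := hu _ hh g'
    have e2 := hu _ hh (g' * FreeGroup.of i)
    rw [inv_mul_cancel_right] at e1
    rw [← mul_assoc, inv_mul_cancel_right] at e2
    rw [e1, e2]; ring
  · intro t a h
    have e1 := h (h₀ * 1)
    have e2 := h 1
    simp only [disp_mul_left hh₀] at e1
    rw [hu h₀ hh₀] at e1
    have : t * χ h₀ = 0 := by linarith
    exact (mul_eq_zero.1 this).resolve_right hχ

end Flow

/-! ### Attracting words are flow lines -/

lemma commonPrefixLength_spec {β : Type*} [DecidableEq β] (L M : List β) :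
    M.take (commonPrefixLength L M) = L.take (commonPrefixLength L M) := by
  induction L generalizing M with
  | nil => simp [commonPrefixLength]
  | cons a L ih =>
    cases M with
    | nil => simp [commonPrefixLength]
    | cons b M =>
      by_cases h : a = b
      · simp [commonPrefixLength, h, ih]
      · simp [commonPrefixLength, h]

lemma commonPrefixLength_le {β : Type*} [DecidableEq β] (L M : List β) :
    commonPrefixLength L M ≤ M.length := by
  induction L generalizing M with
  | nil => simp [commonPrefixLength]
  | cons a L ih =>
    cases M with
    | nil => simp [commonPrefixLength]
    | cons b M =>
      by_cases h : a = b
      · simp [commonPrefixLength, h, ih]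
      · simp [commonPrefixLength, h]

lemma take_toWord_of_le_wedgeF (W : InfWord α) (g : FreeGroup α) {m : ℕ} (h : m ≤ wedgeF W g) :
    (FreeGroup.toWord g).take m = prefixList W m := by
  have h1 := commonPrefixLength_spec (prefixList W (FreeGroup.toWord g).length) g.toWord
  have h2 : wedgeF W g ≤ g.toWord.length := commonPrefixLength_le _ _
  have h3 := congrArg (List.take m) h1
  change List.take m (List.take (wedgeF W g) _) = List.take m (List.take (wedgeF W g) _) at h3
  rw [List.take_take, List.take_take, min_eq_left h] at h3
  rw [h3, prefixList, prefixList, ← List.map_take, List.take_range, min_eq_left (h.trans h2)]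

lemma wordPrefix_succ (W : InfWord α) (i : ℕ) :
    wordPrefix W (i + 1) = wordPrefix W i * FreeGroup.mk [W.1 i] := by
  simp [wordPrefix, prefixList, List.range_succ, FreeGroup.mul_mk]

/-- If `c φ(W_i) c⁻¹` follows `W` for more than `|c|` letters beyond `W_i`, then the flow carries
`W_i` to `W_{i+1}`: cancellation with `c` does not reach the next letter. -/
lemma flow_wordPrefix (φ : FreeGroup α →* FreeGroup α) (c : FreeGroup α) (W : InfWord α) (i : ℕ)
    (h : i + c.norm + 1 ≤ wedgeF W ((innerAut c).comp φ (wordPrefix W i))) :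
    flow φ c (wordPrefix W i) = wordPrefix W (i + 1) := by
  set g := wordPrefix W i with hg
  set y := (innerAut c).comp φ g with hy
  have hy' : y = c * φ g * c⁻¹ := rfl
  have htake := take_toWord_of_le_wedgeF W y h
  have hlen : i + c.norm + 1 ≤ y.toWord.length := h.trans (commonPrefixLength_le _ _)
  have htake' : y.toWord.take i = prefixList W i :=
    take_toWord_of_le_wedgeF W y (by omega)
  have hsplit : y = g * FreeGroup.mk (y.toWord.drop i) := by
    rw [hg, wordPrefix, ← htake', FreeGroup.mul_mk, List.take_append_drop, FreeGroup.mk_toWord]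
  have hred : FreeGroup.IsReduced (y.toWord.drop i) :=
    (FreeGroup.isReduced_toWord (x := y)).infix (List.drop_suffix i _).isInfix
  have hz : (g⁻¹ * y).toWord = y.toWord.drop i := by
    conv_lhs => rw [hsplit, inv_mul_cancel_left, FreeGroup.toWord_mk, hred.reduce_eq]
  have hhead : StartsWith (W.1 i) (g⁻¹ * y) := by
    unfold StartsWith
    rw [hz, List.head?_drop]
    have := congrArg (fun L => L[i]?) htake
    simp only [prefixList] at this
    rw [List.getElem?_take_of_lt (by omega)] at this
    rw [this]
    simp
  have hst : StartsWith (W.1 i) (disp φ c g) := by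
    have e : disp φ c g = g⁻¹ * y * c := by rw [hy', disp]; group
    rw [e]
    apply startsWith_mul hhead
    unfold FreeGroup.norm at hlen ⊢
    rw [hz, List.length_drop]
    omega
  rw [flow, hst.firstLetter_eq, wordPrefix_succ]

lemma isReduced_prefixList (W : InfWord α) (i : ℕ) : FreeGroup.IsReduced (prefixList W i) := by
  rw [FreeGroup.IsReduced, List.isChain_iff_getElem]
  intro k hk h1
  simp only [prefixList, List.getElem_map, List.getElem_range] at h1 ⊢
  by_contra hne
  exact W.2 k (Prod.ext h1.symm (Bool.eq_not_iff.2 (Ne.symm hne)))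

lemma norm_wordPrefix (W : InfWord α) (i : ℕ) : (wordPrefix W i).norm = i := by
  rw [FreeGroup.norm, wordPrefix, FreeGroup.toWord_mk, (isReduced_prefixList W i).reduce_eq]
  simp [prefixList]

/-- Along an attracting fixed word the flow escapes to infinity, so it never reaches a sink. -/
lemma not_attracting_of_sinks (φ : FreeGroup α →* FreeGroup α) (c : FreeGroup α)
    (hsink : ∀ g, ∃ k, IsSink φ (disp φ c ((flow φ c)^[k] g))) (W : InfWord α) :
    ¬ IsAttractingFixedWord ((innerAut c).comp φ) W := by
  rintro ⟨-, hW⟩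
  obtain ⟨i₀, hi₀⟩ := eventually_atTop.1 (hW.eventually_ge_atTop ((c.norm : ℤ) + 1))
  have hflow : ∀ i, i₀ ≤ i → flow φ c (wordPrefix W i) = wordPrefix W (i + 1) := by
    intro i hi
    apply flow_wordPrefix
    have := hi₀ i hi
    omega
  have hiter : ∀ k, (flow φ c)^[k] (wordPrefix W i₀) = wordPrefix W (i₀ + k) := by
    intro k
    induction k with
    | zero => rfl
    | succ k ih => rw [Function.iterate_succ_apply', ih, hflow _ (by omega)]; rfl
  obtain ⟨k, hk⟩ := hsink (wordPrefix W i₀)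
  have h2 := hk.flow_flow
  rw [hiter, hflow _ (by omega), hflow _ (by omega)] at h2
  have := congrArg FreeGroup.norm h2
  simp only [norm_wordPrefix] at this
  omega

/-! ### A displacement class with more sinks than sources -/

section Count

variable [Fintype α] (φ : FreeGroup α →* FreeGroup α)

/-- The local index at `w`: one for the fixed vertex, plus the signed crossings of the edges. -/
noncomputable def localIndex (w : FreeGroup α) : ℤ :=
  (if w = 1 then 1 else 0) + ∑ i, startDiff i (φ (FreeGroup.of i)) w

open Classical in
/-- A word begins with at most one letter, so at most one edge at `w` contributes positively. -/
lemma localIndex_eq (w : FreeGroup α) :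
    localIndex φ w = (if IsSink φ w then 1 else 0) - ∑ i, if IsSource φ w i then 1 else 0 := by
  have hd : ∀ i, startDiff i (φ (FreeGroup.of i)) w =
      (if StartsWith (i, true) w ∧ ¬ StartsWith (i, true) (w * φ (FreeGroup.of i)) then 1 else 0)
        - if IsSource φ w i then 1 else 0 := by
    intro i
    unfold startDiff IsSource
    by_cases h1 : StartsWith (i, true) w <;>
      by_cases h2 : StartsWith (i, true) (w * φ (FreeGroup.of i)) <;>
      simp [h1, h2, startInd_pos, startInd_neg]
  unfold localIndex
  simp only [hd, Finset.sum_sub_distrib]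
  rw [← add_sub_assoc]
  congr 1
  by_cases hw : w = 1
  · subst hw
    rw [if_pos rfl, if_pos (show IsSink φ 1 from Or.inl rfl), Finset.sum_eq_zero, add_zero]
    intro i _
    exact if_neg fun h => not_startsWith_one _ h.1
  · rw [if_neg hw, zero_add]
    by_cases hs : IsSink φ w
    · rw [if_pos hs]
      obtain ⟨i, hi⟩ := hs.resolve_left hw
      rw [Finset.sum_eq_single i, if_pos hi]
      · intro j _ hj
        refine if_neg fun h => hj ?_
        have := h.1.eq hi.1
        simpa using this
      · simp
    · rw [if_neg hs, Finset.sum_eq_zero]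
      intro i _
      exact if_neg fun h => hs (Or.inr ⟨i, h⟩)

/-- The local indices add up to `1 - tr`. -/
lemma sum_localIndex :
    ∑ᶠ w, localIndex φ w = 1 - ∑ i, Multiplicative.toAdd (expSum i (φ (FreeGroup.of i))) := by
  have h0 : (Function.support fun w : FreeGroup α => if w = 1 then (1 : ℤ) else 0).Finite :=
    (Set.finite_singleton (1 : FreeGroup α)).subset fun w hw => by
      by_contra h
      exact hw (if_neg h)
  have h1 : ∀ i, (Function.support (startDiff i (φ (FreeGroup.of i)))).Finite :=
    fun i => (sum_startDiff i _).1
  have h2 : (Function.support fun w => ∑ i, startDiff i (φ (FreeGroup.of i)) w).Finite := by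
    refine (Set.finite_iUnion h1).subset fun w hw => ?_
    obtain ⟨i, -, hi⟩ := Finset.exists_ne_zero_of_sum_ne_zero hw
    exact Set.mem_iUnion.2 ⟨i, hi⟩
  unfold localIndex
  rw [finsum_add_distrib h0 h2, finsum_sum_comm _ _ fun i _ => h1 i,
    finsum_eq_single _ (1 : FreeGroup α) fun w hw => if_neg hw]
  simp only [(sum_startDiff _ _).2, Finset.sum_neg_distrib, if_true]
  ring

open Classical in
/-- The sinks and sources are finite in number. -/
lemma exists_finite_support : ∃ s : Finset (FreeGroup α),
    (∀ w, IsSink φ w → w ∈ s) ∧ (∀ w i, IsSource φ w i → w ∈ s) := by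
  have hfin : ∀ i, (Function.support (startDiff i (φ (FreeGroup.of i)))).Finite :=
    fun i => (sum_startDiff i _).1
  refine ⟨insert 1 (Finset.univ.biUnion fun i => (hfin i).toFinset), ?_, ?_⟩
  · rintro w (rfl | ⟨i, h1, h2⟩)
    · simp
    · refine Finset.mem_insert_of_mem (Finset.mem_biUnion.2 ⟨i, Finset.mem_univ i, ?_⟩)
      simp [startDiff, startInd_pos h1, startInd_neg h2]
  · rintro w i ⟨h1, h2⟩
    refine Finset.mem_insert_of_mem (Finset.mem_biUnion.2 ⟨i, Finset.mem_univ i, ?_⟩)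
    simp [startDiff, startInd_neg h1, startInd_pos h2]

/-- Twisted conjugacy: `w` and `v` are displacements for the same lift of `φ`. -/
def twistedSetoid : Setoid (FreeGroup α) where
  r w v := ∃ g, disp φ w g = v
  iseqv :=
    { refl := fun w => ⟨1, by simp [disp]⟩
      symm := by
        rintro w v ⟨g, rfl⟩
        exact ⟨g⁻¹, by simp only [disp, map_inv]; group⟩
      trans := by
        rintro u v w ⟨g, rfl⟩ ⟨h, rfl⟩
        exact ⟨g * h, by rw [disp_mul]; rfl⟩ }

open Classical in
/-- Since the total index `1 - tr` is positive, some twisted conjugacy class has positive index. -/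
lemma exists_class (htr : ∑ i, Multiplicative.toAdd (expSum i (φ (FreeGroup.of i))) < 1) :
    ∃ (c : FreeGroup α) (P : Finset (FreeGroup α)) (E : Finset (FreeGroup α × α)),
      (∀ p ∈ P, IsSink φ p ∧ ∃ g, disp φ c g = p) ∧
      (∀ g i, IsSource φ (disp φ c g) i → (disp φ c g, i) ∈ E) ∧ E.card < P.card := by
  obtain ⟨s, hs1, hs2⟩ := exists_finite_support φ
  have hsupp : Function.support (localIndex φ) ⊆ s := by
    intro w hw
    by_contra hws
    apply hw
    rw [localIndex_eq, if_neg fun h => hws (hs1 w h), Finset.sum_eq_zero, sub_zero]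
    exact fun i _ => if_neg fun h => hws (hs2 w i h)
  have htot : 0 < ∑ w ∈ s, localIndex φ w := by
    rw [← finsum_eq_sum_of_support_subset _ hsupp, sum_localIndex]
    linarith
  let π : FreeGroup α → Quotient (twistedSetoid φ) := Quotient.mk _
  rw [← Finset.sum_fiberwise_of_maps_to (s := s) (t := s.image π) (g := π)
    fun w hw => Finset.mem_image_of_mem _ hw] at htot
  obtain ⟨q, -, hq⟩ := Finset.exists_lt_of_sum_lt (f := fun _ => (0 : ℤ)) (by simpa using htot)
  obtain ⟨c, rfl⟩ := Quotient.exists_rep q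
  have hmem : ∀ w, π w = π c ↔ ∃ g, disp φ c g = w := fun w =>
    eq_comm.trans (Quotient.eq (r := twistedSetoid φ))
  refine ⟨c, (s.filter (fun w => π w = π c)).filter (IsSink φ),
    ((s.filter (fun w => π w = π c)) ×ˢ Finset.univ).filter (fun e => IsSource φ e.1 e.2),
    ?_, ?_, ?_⟩
  · intro p hp
    simp only [Finset.mem_filter] at hp
    exact ⟨hp.2, (hmem p).1 hp.1.2⟩
  · intro g i hi
    simp only [Finset.mem_filter, Finset.mem_product, Finset.mem_univ, and_true]
    exact ⟨⟨hs2 _ _ hi, (hmem _).2 ⟨g, rfl⟩⟩, hi⟩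
  · change 0 < ∑ w ∈ s.filter (fun w => π w = π c), localIndex φ w at hq
    simp only [localIndex_eq, Finset.sum_sub_distrib] at hq
    rw [← Finset.sum_product' (f := fun w i => if IsSource φ w i then (1 : ℤ) else 0),
      Finset.sum_boole, Finset.sum_boole] at hq
    exact_mod_cast sub_pos.1 hq

end Count

/-- if `tr(φ^ab) < 1` then some `i_c ∘ φ` has trivial fixed subgroup
and no attracting fixed words. -/
theorem stmt2 {n : ℕ} (φ : FreeGroup (Fin n) →* FreeGroup (Fin n))
    (hφ : Function.Injective φ) (htr : abTrace φ < 1) :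
    ∃ c : FreeGroup (Fin n),
      fixedSubgroup ((innerAut c).comp φ) = ⊥ ∧
      ∀ W : InfWord (Fin n), ¬ IsAttractingFixedWord ((innerAut c).comp φ) W := by
  obtain ⟨c, P, E, hP, hE, hlt⟩ := exists_class φ htr
  exact ⟨c, fixed_trivial c P hP E hE hlt,
    not_attracting_of_sinks φ c (exists_sink c P hP E hE hlt)⟩

end ZZFix
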